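/- arXiv:2503.16786 — 2 statements merged into one kernel-verified Lean document; each statement's English description precedes it below -/
import Mathlib

section
/- Let T_a be the random trigonometric polynomial of degree n with a ~ N(0, I_{2n+1}), N = 2n+1. Then E[‖T_a‖_∞] ≍ √(N log N), i.e., there exist absolute constants c, C > 0 with c√(N log N) ≤ E[‖T_a‖_∞] ≤ C√(N log N) for N ≥ 3. -/
open MeasureTheory ProbabilityTheory Real

/-- The random trigonometric polynomial
`T_a(x) = a₁ + ∑_{k=1}^n (a_{2k} √2 cos kx + a_{2k+1} √2 sin kx)`. -/
noncomputable def trigPoly (n : ℕ) (a : Fin (2 * n + 1) → ℝ) (x : ℝ) : ℝ :=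
  a ⟨0, by omega⟩ + ∑ k : Fin n,
    (a ⟨2 * k.1 + 1, by have := k.2; omega⟩ * Real.sqrt 2 * Real.cos ((k.1 + 1 : ℝ) * x)
      + a ⟨2 * k.1 + 2, by have := k.2; omega⟩ * Real.sqrt 2 * Real.sin ((k.1 + 1 : ℝ) * x))

/-- The sup norm of a function on `[0, 2π]`. -/
noncomputable def supNorm (f : ℝ → ℝ) : ℝ :=
  ⨆ x : Set.Icc (0 : ℝ) (2 * π), |f x.1|

/-- The trigonometric basis functions. -/
noncomputable def tphi (i : ℕ) (x : ℝ) : ℝ :=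
  if i = 0 then 1 else if i % 2 = 1 then √2 * Real.cos (((i / 2 : ℕ) + 1 : ℝ) * x)
    else √2 * Real.sin (((i / 2 : ℕ) : ℝ) * x)

lemma tphi_zero (x : ℝ) : tphi 0 x = 1 := by simp [tphi]

lemma tphi_odd (k : ℕ) (x : ℝ) : tphi (2 * k + 1) x = √2 * Real.cos ((k + 1 : ℝ) * x) := by
  have h1 : (2 * k + 1) % 2 = 1 := by omega
  have h2 : (2 * k + 1) / 2 = k := by omega
  simp [tphi, h1, h2]

lemma tphi_even (k : ℕ) (x : ℝ) : tphi (2 * k + 2) x = √2 * Real.sin ((k + 1 : ℝ) * x) := by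
  have h1 : (2 * k + 2) % 2 = 0 := by omega
  have h2 : (2 * k + 2) / 2 = k + 1 := by omega
  simp [tphi, h2]

lemma sum_split_fin (n : ℕ) (g : Fin (2 * n + 1) → ℝ) :
    ∑ i, g i = g ⟨0, by omega⟩ + ∑ k : Fin n, (g ⟨2 * k.1 + 1, by have := k.2; omega⟩
      + g ⟨2 * k.1 + 2, by have := k.2; omega⟩) := by
  let G : ℕ → ℝ := fun i => if h : i < 2 * n + 1 then g ⟨i, h⟩ else 0
  have key : ∀ m, ∑ i ∈ Finset.range (2 * m + 1), G i
      = G 0 + ∑ k ∈ Finset.range m, (G (2 * k + 1) + G (2 * k + 2)) := by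
    intro m
    induction m with
    | zero => simp
    | succ m ih =>
      rw [show 2 * (m + 1) + 1 = 2 * m + 1 + 1 + 1 by ring, Finset.sum_range_succ,
        Finset.sum_range_succ, ih, Finset.sum_range_succ]
      ring
  have h1 : ∑ i, g i = ∑ i ∈ Finset.range (2 * n + 1), G i := by
    rw [← Fin.sum_univ_eq_sum_range]
    refine Finset.sum_congr rfl fun i _ => ?_
    simp only [G, i.2, dif_pos]
  rw [h1, key n, ← Fin.sum_univ_eq_sum_range (fun k => G (2 * k + 1) + G (2 * k + 2))]
  congr 1
  · refine Finset.sum_congr rfl fun k _ => ?_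
    have := k.2
    have a1 : 2 * k.1 + 1 < 2 * n + 1 := by omega
    have a2 : 2 * k.1 + 2 < 2 * n + 1 := by omega
    simp only [G, a1, a2, dif_pos]

lemma trigPoly_eq_sum (n : ℕ) (a : Fin (2 * n + 1) → ℝ) (x : ℝ) :
    trigPoly n a x = ∑ i, a i * tphi i.1 x := by
  rw [sum_split_fin, trigPoly]
  simp only [tphi_zero, tphi_odd, tphi_even]
  simp only [mul_one, mul_assoc]

lemma sum_tphi_mul (n : ℕ) (x y : ℝ) :
    ∑ i : Fin (2 * n + 1), tphi i.1 x * tphi i.1 y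
      = 1 + 2 * ∑ k ∈ Finset.range n, Real.cos ((k + 1 : ℝ) * (x - y)) := by
  rw [sum_split_fin]
  simp only [tphi_zero, tphi_odd, tphi_even]
  rw [← Fin.sum_univ_eq_sum_range (fun k => Real.cos ((k + 1 : ℝ) * (x - y))), Finset.mul_sum]
  congr 1
  · ring
  · refine Finset.sum_congr rfl fun k _ => ?_
    rw [mul_sub, Real.cos_sub]
    have : √2 * √2 = 2 := Real.mul_self_sqrt (by norm_num)
    linear_combination (cos ((k.1 + 1 : ℝ) * x) * cos ((k.1 + 1 : ℝ) * y)
      + sin ((k.1 + 1 : ℝ) * x) * sin ((k.1 + 1 : ℝ) * y)) * this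

lemma sum_tphi_sq (n : ℕ) (x : ℝ) :
    ∑ i : Fin (2 * n + 1), tphi i.1 x * tphi i.1 x = 2 * n + 1 := by
  rw [sum_tphi_mul]; simp; ring

lemma dirichlet_kernel (n : ℕ) (t : ℝ) :
    Real.sin (t / 2) * (1 + 2 * ∑ k ∈ Finset.range n, Real.cos ((k + 1 : ℝ) * t))
      = Real.sin ((2 * n + 1) * (t / 2)) := by
  induction n with
  | zero => simp
  | succ n ih =>
    rw [Finset.sum_range_succ, mul_add 2, ← add_assoc, mul_add (Real.sin (t / 2)), ih]
    push_cast
    rw [show (2 * (n + 1) + 1 : ℝ) * (t / 2) = (n + 1) * t + t / 2 by ring,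
      show (2 * n + 1 : ℝ) * (t / 2) = (n + 1) * t - t / 2 by ring, Real.sin_add, Real.sin_sub]
    ring

lemma sum_tphi_orth (n : ℕ) (i j : Fin (2 * n + 1)) (hij : i ≠ j) :
    ∑ l : Fin (2 * n + 1), tphi l.1 (2 * π * i.1 / (2 * n + 1)) * tphi l.1 (2 * π * j.1 / (2 * n + 1))
      = 0 := by
  rw [sum_tphi_mul]
  set t : ℝ := 2 * π * i.1 / (2 * n + 1) - 2 * π * j.1 / (2 * n + 1) with ht
  have hN : (0 : ℝ) < 2 * n + 1 := by positivity
  have h := dirichlet_kernel n t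
  have h2 : (2 * n + 1 : ℝ) * (t / 2) = ((i.1 - j.1 : ℤ) : ℝ) * π := by
    rw [ht]; push_cast; field_simp
  rw [h2, Real.sin_int_mul_pi] at h
  refine (mul_eq_zero.mp h).resolve_left ?_
  intro h0
  rw [Real.sin_eq_zero_iff] at h0
  obtain ⟨m, hm⟩ := h0
  have h3 : (2 * n + 1 : ℝ) * m = ((i.1 - j.1 : ℤ) : ℝ) := by
    rw [← hm] at h2
    have := Real.pi_pos.ne'
    apply mul_right_cancel₀ this
    linarith
  have h4 : (2 * n + 1 : ℤ) * m = (i.1 - j.1 : ℤ) := by exact_mod_cast h3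
  have hi := i.2
  have hj := j.2
  have hne : i.1 ≠ j.1 := fun h => hij (Fin.ext h)
  rcases lt_trichotomy m 0 with hm | hm | hm
  · have : (2 * n + 1 : ℤ) * m ≤ (2 * n + 1 : ℤ) * (-1) := by
      apply mul_le_mul_of_nonneg_left <;> omega
    omega
  · subst hm; simp at h4; omega
  · have : (2 * n + 1 : ℤ) * 1 ≤ (2 * n + 1 : ℤ) * m := by
      apply mul_le_mul_of_nonneg_left <;> omega
    omega

lemma sqrt_two_le : √2 ≤ 2 := by
  rw [Real.sqrt_le_left (by norm_num)]; norm_num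

lemma abs_tphi_le (i : ℕ) (x : ℝ) : |tphi i x| ≤ 2 := by
  have h := sqrt_two_le
  have h0 := Real.sqrt_nonneg 2
  unfold tphi
  split_ifs
  · norm_num
  · rw [abs_mul, abs_of_nonneg h0]
    nlinarith [Real.abs_cos_le_one (((i / 2 : ℕ) + 1 : ℝ) * x)]
  · rw [abs_mul, abs_of_nonneg h0]
    nlinarith [Real.abs_sin_le_one (((i / 2 : ℕ) : ℝ) * x)]

lemma abs_cos_sub_cos_le' (x y : ℝ) : |cos x - cos y| ≤ |x - y| := by
  have h : LipschitzWith 1 Real.cos := by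
    apply lipschitzWith_of_nnnorm_deriv_le Real.differentiable_cos
    intro z
    rw [Real.deriv_cos, nnnorm_neg]
    exact_mod_cast Real.abs_sin_le_one z
  simpa [Real.dist_eq] using h.dist_le_mul x y

lemma abs_sin_sub_sin_le' (x y : ℝ) : |sin x - sin y| ≤ |x - y| := by
  have h : LipschitzWith 1 Real.sin := by
    apply lipschitzWith_of_nnnorm_deriv_le Real.differentiable_sin
    intro z
    rw [Real.deriv_sin]
    exact_mod_cast Real.abs_cos_le_one z
  simpa [Real.dist_eq] using h.dist_le_mul x y

lemma tphi_lip (n : ℕ) (i : Fin (2 * n + 1)) (x y : ℝ) :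
    |tphi i.1 x - tphi i.1 y| ≤ 2 * (2 * n + 1) * |x - y| := by
  have h := sqrt_two_le
  have h0 := Real.sqrt_nonneg 2
  have hi := i.2
  have haux : ∀ (c d : ℝ), 0 ≤ c → c ≤ 2 * n + 1 → |d| ≤ |c * x - c * y| →
      |√2 * d| ≤ 2 * (2 * n + 1) * |x - y| := by
    intro c d hc hc2 hd
    rw [← mul_sub, abs_mul, abs_of_nonneg hc] at hd
    rw [abs_mul, abs_of_nonneg h0, mul_assoc]
    have : |d| ≤ (2 * n + 1) * |x - y| :=
      hd.trans (mul_le_mul_of_nonneg_right hc2 (abs_nonneg _))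
    exact mul_le_mul h this (abs_nonneg _) (by norm_num)
  unfold tphi
  split_ifs
  · simp; positivity
  · rw [← mul_sub]
    refine haux _ _ (by positivity) ?_ (abs_cos_sub_cos_le' _ _)
    have : i.1 / 2 + 1 ≤ 2 * n + 1 := by omega
    exact_mod_cast this
  · rw [← mul_sub]
    refine haux _ _ (by positivity) ?_ (abs_sin_sub_sin_le' _ _)
    have : i.1 / 2 ≤ 2 * n + 1 := by omega
    exact_mod_cast this

/-! ### Sup norm -/

lemma abs_trigPoly_le (n : ℕ) (a : Fin (2 * n + 1) → ℝ) (x : ℝ) :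
    |trigPoly n a x| ≤ 2 * ∑ i, |a i| := by
  rw [trigPoly_eq_sum, Finset.mul_sum]
  refine (Finset.abs_sum_le_sum_abs _ _).trans (Finset.sum_le_sum fun i _ => ?_)
  rw [abs_mul, mul_comm]
  exact mul_le_mul_of_nonneg_right (abs_tphi_le _ _) (abs_nonneg _)

lemma trigPoly_lip (n : ℕ) (a : Fin (2 * n + 1) → ℝ) (x y : ℝ) :
    |trigPoly n a x - trigPoly n a y| ≤ 2 * (2 * n + 1) * |x - y| * ∑ i, |a i| := by
  rw [trigPoly_eq_sum, trigPoly_eq_sum, ← Finset.sum_sub_distrib, Finset.mul_sum]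
  refine (Finset.abs_sum_le_sum_abs _ _).trans (Finset.sum_le_sum fun i _ => ?_)
  rw [← mul_sub, abs_mul, mul_comm]
  exact mul_le_mul_of_nonneg_right (tphi_lip _ _ _ _) (abs_nonneg _)

instance nonempty_icc_two_pi : Nonempty (Set.Icc (0 : ℝ) (2 * π)) :=
  ⟨⟨0, le_refl _, by positivity⟩⟩

lemma bdd_trigPoly (n : ℕ) (a : Fin (2 * n + 1) → ℝ) :
    BddAbove (Set.range fun x : Set.Icc (0 : ℝ) (2 * π) => |trigPoly n a x.1|) :=
  ⟨2 * ∑ i, |a i|, by rintro _ ⟨x, rfl⟩; exact abs_trigPoly_le n a x.1⟩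

lemma le_supNorm (n : ℕ) (a : Fin (2 * n + 1) → ℝ) (x : ℝ) (hx : x ∈ Set.Icc (0 : ℝ) (2 * π)) :
    |trigPoly n a x| ≤ supNorm (trigPoly n a) :=
  le_ciSup (bdd_trigPoly n a) ⟨x, hx⟩

lemma supNorm_le (n : ℕ) (a : Fin (2 * n + 1) → ℝ) (B : ℝ)
    (h : ∀ x ∈ Set.Icc (0 : ℝ) (2 * π), |trigPoly n a x| ≤ B) :
    supNorm (trigPoly n a) ≤ B :=
  ciSup_le fun x => h x.1 x.2

lemma supNorm_nonneg' (n : ℕ) (a : Fin (2 * n + 1) → ℝ) : 0 ≤ supNorm (trigPoly n a) :=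
  (abs_nonneg _).trans (le_supNorm n a 0 ⟨le_refl _, by positivity⟩)

lemma supNorm_le_add (n : ℕ) (a b : Fin (2 * n + 1) → ℝ) :
    supNorm (trigPoly n a) ≤ supNorm (trigPoly n b) + 2 * (2 * n + 1) * dist a b := by
  refine supNorm_le n a _ fun x hx => ?_
  have h1 : trigPoly n a x = trigPoly n b x + trigPoly n (a - b) x := by
    simp only [trigPoly_eq_sum, ← Finset.sum_add_distrib]
    refine Finset.sum_congr rfl fun i _ => ?_
    simp; ring
  rw [h1]
  refine (abs_add_le _ _).trans (add_le_add (le_supNorm n b x hx) ?_)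
  refine (abs_trigPoly_le n _ x).trans ?_
  have h2 : ∑ i, |(a - b) i| ≤ ∑ i : Fin (2 * n + 1), dist a b :=
    Finset.sum_le_sum fun i _ => by
      rw [Pi.sub_apply, ← Real.dist_eq]; exact dist_le_pi_dist a b i
  simp only [Finset.sum_const, Finset.card_univ, Fintype.card_fin, nsmul_eq_mul] at h2
  push_cast at h2
  linarith

lemma continuous_supNorm (n : ℕ) : Continuous fun a : Fin (2 * n + 1) → ℝ =>
    supNorm (trigPoly n a) := by
  have : LipschitzWith (2 * (2 * n + 1)) fun a : Fin (2 * n + 1) → ℝ => supNorm (trigPoly n a) :=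
    LipschitzWith.of_le_add_mul _ fun a b => by
      simpa using supNorm_le_add n a b
  exact this.continuous

/-! ### The Gaussian measure -/

/-- The standard Gaussian measure. -/
noncomputable abbrev gmu (n : ℕ) : Measure (Fin (2 * n + 1) → ℝ) :=
  Measure.pi fun _ => gaussianReal 0 1

lemma gmu_eval_law (n : ℕ) (i : Fin (2 * n + 1)) :
    (gmu n).map (fun a => a i) = gaussianReal 0 1 :=
  (measurePreserving_eval (fun _ : Fin (2 * n + 1) => gaussianReal 0 1) i).map_eq

lemma gmu_indep (n : ℕ) : iIndepFun (fun (i : Fin (2 * n + 1)) a => a i) (gmu n) :=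
  iIndepFun_pi (X := fun _ => id) (fun _ => aemeasurable_id)

lemma gmu_eval_gauss (n : ℕ) (i : Fin (2 * n + 1)) :
    HasGaussianLaw (fun a : Fin (2 * n + 1) → ℝ => a i) (gmu n) where
  isGaussian_map := by rw [gmu_eval_law]; infer_instance

lemma gmu_gauss (n : ℕ) : HasGaussianLaw (fun a : Fin (2 * n + 1) → ℝ => fun i => a i) (gmu n) :=
  (gmu_indep n).hasGaussianLaw (gmu_eval_gauss n)

lemma gmu_memLp (n : ℕ) (i : Fin (2 * n + 1)) :
    MemLp (fun a : Fin (2 * n + 1) → ℝ => a i) 2 (gmu n) := (gmu_eval_gauss n i).memLp_two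

lemma gmu_mean (n : ℕ) (i : Fin (2 * n + 1)) : ∫ a, a i ∂(gmu n) = 0 := by
  have := integral_map (μ := gmu n) (φ := fun a => a i) (measurable_pi_apply i).aemeasurable (f := fun x : ℝ => x)
    (by fun_prop)
  rw [← this, gmu_eval_law, integral_id_gaussianReal]

lemma gmu_var (n : ℕ) (i : Fin (2 * n + 1)) : Var[fun a => a i; gmu n] = 1 := by
  have := variance_map (μ := gmu n) (Y := fun a => a i) (X := fun x : ℝ => x)
    (by fun_prop) (measurable_pi_apply i).aemeasurable
  rw [gmu_eval_law, variance_fun_id_gaussianReal] at this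
  simpa [Function.comp_def] using this.symm

lemma gmu_cov (n : ℕ) (i j : Fin (2 * n + 1)) :
    cov[fun a => a i, fun a => a j; gmu n] = if i = j then 1 else 0 := by
  split_ifs with h
  · subst h
    rw [covariance_self (measurable_pi_apply i).aemeasurable, gmu_var]
  · exact ((gmu_indep n).indepFun h).covariance_eq_zero (gmu_memLp n i) (gmu_memLp n j)

lemma gmu_cov_lin (n : ℕ) (u v : Fin (2 * n + 1) → ℝ) :
    cov[fun a => ∑ i, a i * u i, fun a => ∑ i, a i * v i; gmu n] = ∑ i, u i * v i := by
  rw [covariance_fun_sum_fun_sum (fun i => (gmu_memLp n i).mul_const _)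
    (fun i => (gmu_memLp n i).mul_const _)]
  simp only [covariance_mul_const_left, covariance_mul_const_right, gmu_cov]
  simp [mul_comm]

lemma trigPoly_gauss_family (n : ℕ) {ι : Type*} [Fintype ι] (x : ι → ℝ) :
    HasGaussianLaw (fun a : Fin (2 * n + 1) → ℝ => fun j => trigPoly n a (x j)) (gmu n) := by
  let L : (Fin (2 * n + 1) → ℝ) →L[ℝ] (ι → ℝ) :=
    ContinuousLinearMap.pi fun j => ∑ i, (tphi i.1 (x j)) • ContinuousLinearMap.proj i
  have h := (gmu_gauss n).map_fun L
  have e : (fun a : Fin (2 * n + 1) → ℝ => fun j => trigPoly n a (x j))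
      = fun a => L (fun i => a i) := by
    ext a j
    simp [L, trigPoly_eq_sum, mul_comm]
  rw [e]
  exact h

lemma trigPoly_cov (n : ℕ) (x y : ℝ) :
    cov[fun a => trigPoly n a x, fun a => trigPoly n a y; gmu n]
      = ∑ i : Fin (2 * n + 1), tphi i.1 x * tphi i.1 y := by
  simp only [trigPoly_eq_sum]
  exact gmu_cov_lin n _ _

lemma measurable_trigPoly (n : ℕ) (x : ℝ) :
    Measurable (fun a : Fin (2 * n + 1) → ℝ => trigPoly n a x) := by
  simp only [trigPoly_eq_sum]; fun_prop

lemma trigPoly_law (n : ℕ) (x : ℝ) :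
    (gmu n).map (fun a => trigPoly n a x) = gaussianReal 0 (2 * n + 1) := by
  have h := ((trigPoly_gauss_family n (fun _ : Unit => x)).eval ()).map_eq_gaussianReal
  rw [h]
  congr 1
  · simp only [trigPoly_eq_sum]
    rw [integral_finsetSum _ (fun i _ => ((gmu_memLp n i).integrable (by norm_num)).mul_const _)]
    simp [integral_mul_const, gmu_mean]
  · rw [← covariance_self (measurable_trigPoly n x).aemeasurable, trigPoly_cov, sum_tphi_sq]
    ext
    rw [Real.coe_toNNReal _ (by positivity)]
    push_cast; rfl

lemma trigPoly_indep (n : ℕ) : iIndepFun (fun (j : Fin (2 * n + 1)) a =>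
    trigPoly n a (2 * π * j.1 / (2 * n + 1))) (gmu n) := by
  apply (trigPoly_gauss_family n
    (fun j : Fin (2 * n + 1) => 2 * π * j.1 / (2 * n + 1))).iIndepFun_of_covariance_eq_zero
  intro i j hij
  rw [trigPoly_cov, sum_tphi_orth n i j hij]

lemma integrable_sum_abs (n : ℕ) :
    Integrable (fun a : Fin (2 * n + 1) → ℝ => ∑ i, |a i|) (gmu n) :=
  integrable_finsetSum _ fun i _ => ((gmu_memLp n i).integrable (by norm_num)).abs

lemma integrable_supNorm (n : ℕ) :
    Integrable (fun a : Fin (2 * n + 1) → ℝ => supNorm (trigPoly n a)) (gmu n) := by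
  refine ((integrable_sum_abs n).const_mul 2).mono'
    (continuous_supNorm n).aestronglyMeasurable (ae_of_all _ fun a => ?_)
  rw [Real.norm_eq_abs, abs_of_nonneg (supNorm_nonneg' n a)]
  exact supNorm_le n a _ fun x _ => abs_trigPoly_le n a x

lemma integral_abs_le (n : ℕ) (i : Fin (2 * n + 1)) : ∫ a, |a i| ∂(gmu n) ≤ 1 := by
  have hv := gmu_var n i
  rw [variance_eq_sub (gmu_memLp n i), gmu_mean] at hv
  have hsq : Integrable (fun a : Fin (2 * n + 1) → ℝ => a i ^ 2) (gmu n) := (gmu_memLp n i).integrable_sq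
  have h : ∫ a, |a i| ∂(gmu n) ≤ ∫ a, (1 + a i ^ 2) / 2 ∂(gmu n) := by
    refine integral_mono ((gmu_memLp n i).integrable (by norm_num)).abs
      (((integrable_const 1).add hsq).div_const 2) fun a => ?_
    have := sq_nonneg (|a i| - 1)
    have h2 := sq_abs (a i)
    show |a i| ≤ (1 + a i ^ 2) / 2
    nlinarith
  rw [integral_div, integral_add (integrable_const 1) hsq] at h
  simp at hv h
  linarith

lemma integral_sum_abs_le (n : ℕ) : ∫ a, ∑ i, |a i| ∂(gmu n) ≤ 2 * n + 1 := by
  rw [integral_finsetSum _ fun i _ => ((gmu_memLp n i).integrable (by norm_num)).abs]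
  refine (Finset.sum_le_sum fun i _ => integral_abs_le n i).trans ?_
  simp

lemma integrable_exp_trigPoly (n : ℕ) (x l : ℝ) :
    Integrable (fun a => exp (l * trigPoly n a x)) (gmu n) := by
  have h := integrable_exp_mul_gaussianReal (μ := 0) (v := 2 * n + 1) l
  rw [← trigPoly_law n x, integrable_map_measure (by fun_prop)
    (measurable_trigPoly n x).aemeasurable] at h
  exact h

lemma integral_exp_trigPoly (n : ℕ) (x l : ℝ) :
    ∫ a, exp (l * trigPoly n a x) ∂(gmu n) = exp (l ^ 2 * (2 * n + 1) / 2) := by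
  have h := mgf_gaussianReal (trigPoly_law n x) l
  rw [mgf] at h
  rw [h]; push_cast; ring_nf

/-! ### Lower bound -/

lemma gauss_tail (v : NNReal) (hv : v ≠ 0) (t : ℝ) (ht : 0 ≤ t) :
    (√(2 * π))⁻¹ * exp (-(t ^ 2 + 1)) ≤ (gaussianReal 0 v).real {x | |x| ≤ √v * t}ᶜ := by
  have hv0 : (0 : ℝ) < v := by exact_mod_cast pos_iff_ne_zero.mpr hv
  have hs : 0 < √(v : ℝ) := Real.sqrt_pos.mpr hv0
  have hsub : Set.Ioc (√v * t) (√v * (t + 1)) ⊆ {x | |x| ≤ √v * t}ᶜ := by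
    intro x hx
    simp only [Set.mem_compl_iff, Set.mem_ofPred_eq, not_le]
    exact hx.1.trans_le (le_abs_self x)
  refine le_trans ?_ (measureReal_mono hsub)
  have hint : (gaussianReal 0 v).real (Set.Ioc (√v * t) (√v * (t + 1)))
      = ∫ x in Set.Ioc (√v * t) (√v * (t + 1)), gaussianPDFReal 0 v x := by
    rw [measureReal_def, gaussianReal_apply_eq_integral 0 hv, ENNReal.toReal_ofReal]
    exact integral_nonneg fun x => gaussianPDFReal_nonneg 0 v x
  rw [hint]
  have hc : ∫ x in Set.Ioc (√v * t) (√v * (t + 1)),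
      ((√(2 * π * v))⁻¹ * exp (-(t ^ 2 + 1))) = (√(2 * π))⁻¹ * exp (-(t ^ 2 + 1)) := by
    rw [setIntegral_const, Real.volume_real_Ioc_of_le (by nlinarith), smul_eq_mul,
      Real.sqrt_mul (by positivity)]
    field_simp
    ring
  rw [← hc]
  refine setIntegral_mono_on (integrableOn_const (by simp) enorm_ne_top)
    (integrable_gaussianPDFReal 0 v).integrableOn
    measurableSet_Ioc fun x hx => ?_
  rw [gaussianPDFReal]
  refine mul_le_mul_of_nonneg_left (exp_le_exp.mpr ?_) (by positivity)
  have hx0 : 0 ≤ x := by have := hx.1; have : 0 ≤ √(v : ℝ) * t := by positivity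
                         linarith
  have hx2 : x ^ 2 ≤ v * (t + 1) ^ 2 := by
    calc x ^ 2 ≤ (√v * (t + 1)) ^ 2 := pow_le_pow_left₀ hx0 hx.2 2
      _ = v * (t + 1) ^ 2 := by rw [mul_pow, Real.sq_sqrt hv0.le]
  rw [sub_zero, neg_div, neg_le_neg_iff, div_le_iff₀ (by positivity)]
  nlinarith [mul_nonneg hv0.le (sq_nonneg (t - 1))]

lemma lower_bound (n : ℕ) :
    (1 - exp (-((√(2 * π))⁻¹ * exp (-1)))) * √((2 * n + 1 : ℝ) * log (2 * n + 1 : ℝ))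
      ≤ ∫ a, supNorm (trigPoly n a) ∂(gmu n) := by
  set c0 := (√(2 * π))⁻¹ * exp (-1) with hc0
  set s := √((2 * n + 1 : ℝ) * log (2 * n + 1 : ℝ)) with hs
  have hN : (0 : ℝ) < 2 * n + 1 := by positivity
  have hlog : 0 ≤ log (2 * n + 1 : ℝ) := Real.log_nonneg (by
    have : (0 : ℝ) ≤ n := by positivity
    linarith)
  have hmk := mul_meas_ge_le_integral_of_nonneg
    (ae_of_all (gmu n) fun a => supNorm_nonneg' n a) (integrable_supNorm n) s
  refine le_trans ?_ hmk
  rw [mul_comm]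
  refine mul_le_mul_of_nonneg_left ?_ (Real.sqrt_nonneg _)
  set S : Set ℝ := {x | |x| ≤ s} with hS
  have hSm : MeasurableSet S := measurableSet_le (by fun_prop) (by fun_prop)
  set Y : Fin (2 * n + 1) → (Fin (2 * n + 1) → ℝ) → ℝ :=
    fun j a => trigPoly n a (2 * π * j.1 / (2 * n + 1)) with hY
  have hYm : ∀ j, Measurable (Y j) := fun j => measurable_trigPoly n _
  have hq : ∀ j, (gmu n).real (Y j ⁻¹' S) ≤ 1 - c0 / (2 * n + 1) := by
    intro j
    have h1 : (gmu n).real (Y j ⁻¹' S) = (gaussianReal 0 (2 * n + 1)).real S := by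
      rw [← trigPoly_law n (2 * π * j.1 / (2 * n + 1)), map_measureReal_apply (hYm j) hSm]
    have h2 := gauss_tail (2 * n + 1) (by positivity) (√(log (2 * n + 1 : ℝ))) (Real.sqrt_nonneg _)
    have h3 : √((2 * n + 1 : NNReal) : ℝ) * √(log (2 * n + 1 : ℝ)) = s := by
      push_cast
      rw [hs, Real.sqrt_mul hN.le]
    rw [h3, measureReal_compl hSm, probReal_univ, Real.sq_sqrt hlog, neg_add, exp_add, exp_neg,
      Real.exp_log hN] at h2
    rw [h1]
    have : (√(2 * π))⁻¹ * ((2 * n + 1 : ℝ)⁻¹ * exp (-1)) = c0 / (2 * n + 1) := by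
      rw [hc0]; field_simp
    linarith
  have hall : (gmu n).real (⋂ j, Y j ⁻¹' S) ≤ exp (-c0) := by
    have h1 : (gmu n) (⋂ j, Y j ⁻¹' S) = ∏ j, (gmu n) (Y j ⁻¹' S) :=
      (trigPoly_indep n).meas_iInter fun j => ⟨S, hSm, rfl⟩
    rw [measureReal_def, h1, ENNReal.toReal_prod]
    calc ∏ j, ((gmu n) (Y j ⁻¹' S)).toReal
        ≤ ∏ j : Fin (2 * n + 1), exp (-(c0 / (2 * n + 1))) := by
          refine Finset.prod_le_prod (fun j _ => ENNReal.toReal_nonneg) fun j _ => ?_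
          refine (hq j).trans ?_
          have := Real.add_one_le_exp (-(c0 / (2 * n + 1)))
          linarith
      _ = exp (-c0) := by
          rw [Finset.prod_const, Finset.card_univ, Fintype.card_fin, ← Real.exp_nat_mul]
          congr 1
          push_cast
          field_simp
  have hcompl : (⋂ j, Y j ⁻¹' S)ᶜ ⊆ {a | s ≤ supNorm (trigPoly n a)} := by
    intro a ha
    simp only [Set.mem_compl_iff, Set.mem_iInter, not_forall] at ha
    obtain ⟨j, hj⟩ := ha
    have hj' : s < |Y j a| := by simpa [hS] using hj
    refine hj'.le.trans (le_supNorm n a _ ⟨by positivity, ?_⟩)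
    rw [div_le_iff₀ hN]
    have : (j.1 : ℝ) ≤ 2 * n + 1 := by exact_mod_cast j.2.le
    exact mul_le_mul_of_nonneg_left this (by positivity)
  have hmono : (gmu n).real (⋂ j, Y j ⁻¹' S)ᶜ ≤ _ := measureReal_mono hcompl
  rw [measureReal_compl (MeasurableSet.iInter fun j => hYm j hSm), probReal_univ] at hmono
  linarith

/-! ### Upper bound -/

lemma exists_grid (M : ℕ) (hM : 0 < M) (x : ℝ) (hx : x ∈ Set.Icc (0 : ℝ) (2 * π)) :
    ∃ j ∈ Finset.range (M + 1), |x - 2 * π * j / M| ≤ 2 * π / M := by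
  have hM' : (0 : ℝ) < M := by exact_mod_cast hM
  have hpi := Real.pi_pos
  have h0 : 0 ≤ x * M / (2 * π) := by have := hx.1; positivity
  refine ⟨⌊x * M / (2 * π)⌋₊, ?_, ?_⟩
  · rw [Finset.mem_range, Nat.lt_succ_iff]
    apply Nat.floor_le_of_le
    rw [div_le_iff₀ (by positivity)]
    nlinarith [hx.2]
  · have h1 := Nat.floor_le h0
    have h2 := Nat.lt_floor_add_one (x * M / (2 * π))
    set f : ℝ := (⌊x * M / (2 * π)⌋₊ : ℝ)
    rw [le_div_iff₀ (by positivity)] at h1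
    rw [div_lt_iff₀ (by positivity)] at h2
    rw [abs_le]
    constructor
    · rw [neg_le_sub_iff_le_add, div_le_iff₀ hM']
      have : x * M + 2 * π ≥ f * (2 * π) := by linarith
      have e : (x + 2 * π / M) * M = x * M + 2 * π := by field_simp
      linarith
    · rw [sub_le_iff_le_add, ← add_div, le_div_iff₀ hM']
      linarith

lemma pointwise_upper (n M : ℕ) (hM : 0 < M) (l K : ℝ) (hl : 0 < l) (hK : 0 < K)
    (a : Fin (2 * n + 1) → ℝ) :
    supNorm (trigPoly n a) ≤ l⁻¹ * (log K + (∑ j ∈ Finset.range (M + 1),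
      (exp (l * trigPoly n a (2 * π * j / M)) + exp (-l * trigPoly n a (2 * π * j / M)))) / K)
      + 2 * (2 * n + 1) * (2 * π / M) * ∑ i, |a i| := by
  refine supNorm_le n a _ fun x hx => ?_
  obtain ⟨j, hj, hxj⟩ := exists_grid M hM x hx
  have h1 := trigPoly_lip n a x (2 * π * j / M)
  have h2 : 2 * (2 * n + 1) * |x - 2 * π * j / M| * ∑ i, |a i|
      ≤ 2 * (2 * n + 1) * (2 * π / M) * ∑ i, |a i| := by
    refine mul_le_mul_of_nonneg_right (mul_le_mul_of_nonneg_left hxj (by positivity))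
      (Finset.sum_nonneg fun i _ => abs_nonneg _)
  have h3 := abs_sub_abs_le_abs_sub (trigPoly n a x) (trigPoly n a (2 * π * j / M))
  set F : ℕ → ℝ := fun j =>
      (exp (l * trigPoly n a (2 * π * j / M)) + exp (-l * trigPoly n a (2 * π * j / M))) with hF
  have h4 : F j ≤ ∑ j ∈ Finset.range (M + 1), F j :=
    Finset.single_le_sum (f := F) (fun i _ => by simp only [hF]; positivity) hj
  set y := trigPoly n a (2 * π * j / M) with hy
  have h5 : exp (l * |y|) ≤ F j := by
    simp only [hF]
    rw [← hy]
    rcases abs_cases y with ⟨h, _⟩ | ⟨h, _⟩ <;> rw [h]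
    · linarith [exp_pos (-l * y)]
    · rw [show l * -y = -l * y by ring]
      linarith [exp_pos (l * y)]
  have h6 : l * |y| ≤ log K + exp (l * |y|) / K := by
    have := Real.add_one_le_exp (l * |y| - log K)
    rw [exp_sub, Real.exp_log hK] at this
    linarith
  have h7 : exp (l * |y|) / K ≤ (∑ j ∈ Finset.range (M + 1), F j) / K :=
    div_le_div_of_nonneg_right (h5.trans h4) hK.le
  have h8 : |y| ≤ l⁻¹ * (log K + (∑ j ∈ Finset.range (M + 1), F j) / K) := by
    rw [inv_mul_eq_div, le_div_iff₀ hl]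
    linarith
  linarith

lemma integral_upper (n M : ℕ) (hM : 0 < M) (l K : ℝ) (hl : 0 < l) (hK : 0 < K) :
    ∫ a, supNorm (trigPoly n a) ∂(gmu n) ≤ l⁻¹ * (log K + ((M + 1) *
      (2 * exp (l ^ 2 * (2 * n + 1) / 2))) / K)
      + 2 * (2 * n + 1) * (2 * π / M) * (2 * n + 1) := by
  have hi : ∀ j : ℕ, Integrable (fun a => exp (l * trigPoly n a (2 * π * j / M))
      + exp (-l * trigPoly n a (2 * π * j / M))) (gmu n) := fun j =>
    (integrable_exp_trigPoly n _ l).add (integrable_exp_trigPoly n _ (-l))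
  have hsum : Integrable (fun a => (∑ j ∈ Finset.range (M + 1),
      (exp (l * trigPoly n a (2 * π * j / M)) + exp (-l * trigPoly n a (2 * π * j / M)))) / K)
      (gmu n) := (integrable_finsetSum _ fun j _ => hi j).div_const K
  have hA := ((integrable_const (μ := gmu n) (log K)).add hsum).const_mul l⁻¹
  have hB := (integrable_sum_abs n).const_mul (2 * (2 * n + 1) * (2 * π / M))
  refine (integral_mono (integrable_supNorm n) (hA.add hB)
    (fun a => pointwise_upper n M hM l K hl hK a)).trans ?_
  simp only [Pi.add_apply]
  rw [integral_add (by simpa using hA) hB, integral_const_mul, integral_const_mul,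
    integral_add (integrable_const _) hsum, integral_div, integral_finsetSum _ fun j _ => hi j]
  have hj : ∀ j : ℕ, ∫ a, (exp (l * trigPoly n a (2 * π * j / M))
      + exp (-l * trigPoly n a (2 * π * j / M))) ∂(gmu n) = 2 * exp (l ^ 2 * (2 * n + 1) / 2) := by
    intro j
    rw [integral_add (integrable_exp_trigPoly n _ l) (integrable_exp_trigPoly n _ (-l)),
      integral_exp_trigPoly, integral_exp_trigPoly, neg_sq]
    ring
  simp only [hj]
  have h1 := mul_le_mul_of_nonneg_left (integral_sum_abs_le n)
    (show (0 : ℝ) ≤ 2 * (2 * n + 1) * (2 * π / M) by positivity)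
  simp only [integral_const, probReal_univ, Finset.sum_const, Finset.card_range, nsmul_eq_mul,
    one_smul]
  push_cast
  linarith

lemma upper_bound (n : ℕ) (hn : 3 ≤ 2 * n + 1) :
    ∫ a, supNorm (trigPoly n a) ∂(gmu n)
      ≤ 20 * √((2 * n + 1 : ℝ) * log (2 * n + 1 : ℝ)) := by
  have hN3 : (3 : ℝ) ≤ 2 * n + 1 := by exact_mod_cast hn
  set N : ℝ := 2 * n + 1 with hN
  have hN0 : 0 < N := by linarith
  have hL : 1 ≤ log N := by
    rw [Real.le_log_iff_exp_le hN0]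
    linarith [Real.exp_one_lt_d9]
  set L := log N with hLdef
  set l := √(L / N) with hldef
  have hl : 0 < l := Real.sqrt_pos.mpr (by positivity)
  have hl2 : l ^ 2 = L / N := Real.sq_sqrt (by positivity)
  set R := √(N * L) with hR
  have hR1 : 1 ≤ R := Real.one_le_sqrt.mpr (by nlinarith)
  have hlR : l * R = L := by
    rw [hldef, hR, ← Real.sqrt_mul (by positivity),
      show L / N * (N * L) = L ^ 2 by field_simp, Real.sqrt_sq (by linarith)]
  have hlinv : l⁻¹ * L = R := by rw [← hlR]; field_simp
  have hNsq : (((2 * n + 1) ^ 2 : ℕ) : ℝ) = N ^ 2 := by push_cast; rfl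
  set K : ℝ := (N ^ 2 + 1) * (2 * exp (l ^ 2 * N / 2)) with hK
  have hK0 : 0 < K := by positivity
  have h := integral_upper n ((2 * n + 1) ^ 2) (by positivity) l K hl hK0
  rw [hNsq, ← hN, ← hK, div_self hK0.ne'] at h
  have hlogK : log K ≤ 4 * L + L / 2 := by
    rw [hK, show (N ^ 2 + 1) * (2 * exp (l ^ 2 * N / 2))
      = (2 * (N ^ 2 + 1)) * exp (l ^ 2 * N / 2) by ring,
      Real.log_mul (by positivity) (exp_pos _).ne', Real.log_exp, hl2]
    have e : L / N * N / 2 = L / 2 := by field_simp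
    have h4 : log (2 * (N ^ 2 + 1)) ≤ log (N ^ 4) := by
      apply Real.log_le_log (by positivity)
      nlinarith [sq_nonneg N, mul_self_nonneg (N ^ 2 - 9)]
    rw [Real.log_pow] at h4
    push_cast at h4
    linarith
  have hb : l⁻¹ * (log K + 1) ≤ l⁻¹ * (6 * L) :=
    mul_le_mul_of_nonneg_left (by linarith) (by positivity)
  have hc : 2 * N * (2 * π / N ^ 2) * N = 4 * π := by field_simp; ring
  have hpi := Real.pi_lt_d2
  have : l⁻¹ * (6 * L) = 6 * R := by rw [← hlinv]; ring
  rw [hc] at h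
  linarith

/-- `E[‖T_a‖_∞] ≍ √(N log N)` for `N = 2n+1 ≥ 3`. -/
theorem expected_sup_norm_trig :
    ∃ c C : ℝ, 0 < c ∧ 0 < C ∧ ∀ n : ℕ, 3 ≤ 2 * n + 1 →
      c * Real.sqrt ((2 * n + 1 : ℝ) * Real.log (2 * n + 1 : ℝ)) ≤
          (∫ a : Fin (2 * n + 1) → ℝ, supNorm (trigPoly n a)
            ∂(Measure.pi fun _ => gaussianReal 0 1)) ∧
        (∫ a : Fin (2 * n + 1) → ℝ, supNorm (trigPoly n a)
            ∂(Measure.pi fun _ => gaussianReal 0 1)) ≤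
          C * Real.sqrt ((2 * n + 1 : ℝ) * Real.log (2 * n + 1 : ℝ)) := by
  refine ⟨1 - exp (-((√(2 * π))⁻¹ * exp (-1))), 20, ?_, by norm_num, fun n hn =>
    ⟨lower_bound n, upper_bound n hn⟩⟩
  have : 0 < (√(2 * π))⁻¹ * exp (-1) := by positivity
  have := Real.exp_lt_exp.mpr (neg_lt_zero.mpr this)
  rw [Real.exp_zero] at this
  linarith
end

section
/- Let T_a be the random trigonometric polynomial of degree n with a ~ N(0, I_N), N = 2n+1. Then for all 1 ≤ p, q < ∞ there exist constants c, C > 0 (independent of n but possibly depending on p, q) such that c ≤ E[‖T_a‖_q / ‖T_a‖_p] ≤ C. In particular the average Nikolskii factor is bounded, in contrast to the worst-case factor which grows like n^{(1/p - 1/q)_+}. -/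
open MeasureTheory ProbabilityTheory Real

/-- The normalized `L^p` norm on the torus `[0, 2π]`, for `1 ≤ p < ∞`. -/
noncomputable def torusLpNorm (p : ℝ) (f : ℝ → ℝ) : ℝ :=
  ((2 * π)⁻¹ * ∫ x in (0 : ℝ)..(2 * π), |f x| ^ p) ^ (1 / p)


noncomputable def bas (i : ℕ) (x : ℝ) : ℝ :=
  if i = 0 then 1 else √2 * Real.cos ((((i + 1) / 2 : ℕ) : ℝ) * x - (if Even i then π / 2 else 0))

lemma bas_odd (k : ℕ) (x : ℝ) : bas (2 * k + 1) x = √2 * Real.cos ((k + 1 : ℝ) * x) := by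
  have h : (2 * k + 1 + 1) / 2 = k + 1 := by omega
  have h2 : ¬ Even (2 * k + 1) := by simp
  simp [bas, h, h2]

lemma bas_even (k : ℕ) (x : ℝ) : bas (2 * k + 2) x = √2 * Real.sin ((k + 1 : ℝ) * x) := by
  have h : (2 * k + 2 + 1) / 2 = k + 1 := by omega
  have h2 : Even (2 * k + 2) := ⟨k + 1, by ring⟩
  simp [bas, h, h2, Real.cos_sub_pi_div_two]

lemma bas_cont (i : ℕ) : Continuous (bas i) := by
  unfold bas
  split_ifs <;> fun_prop

lemma sum_split (n : ℕ) (g : Fin (2 * n + 1) → ℝ) :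
    ∑ i, g i = g ⟨0, by omega⟩ + ∑ k : Fin n,
      (g ⟨2 * k.1 + 1, by have := k.2; omega⟩ + g ⟨2 * k.1 + 2, by have := k.2; omega⟩) := by
  induction n with
  | zero => simp
  | succ n ih =>
    have e := Fin.sum_univ_castSucc (n := 2 * n + 1 + 1) g
    rw [show (∑ i, g i) = _ from e, Fin.sum_univ_castSucc, ih, Fin.sum_univ_castSucc]
    simp only [Fin.castSucc_mk, Fin.val_castSucc, Fin.val_last]
    have e1 : (Fin.last (2 * n + 1)).castSucc = (⟨2 * n + 1, by omega⟩ : Fin (2 * n + 1 + 1 + 1)) := rfl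
    have e2 : (Fin.last (2 * n + 1 + 1)) = (⟨2 * n + 2, by omega⟩ : Fin (2 * n + 1 + 1 + 1)) := rfl
    rw [e1, e2]
    ring

lemma trigPoly_eq (n : ℕ) (a : Fin (2 * n + 1) → ℝ) (x : ℝ) :
    trigPoly n a x = ∑ i, a i * bas i x := by
  rw [sum_split, trigPoly]
  simp only [bas_odd, bas_even]
  simp [bas, mul_assoc]

lemma sum_bas_sq (n : ℕ) (x : ℝ) : ∑ i : Fin (2 * n + 1), bas i x ^ 2 = 2 * n + 1 := by
  rw [sum_split n (fun i => bas i x ^ 2)]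
  simp only [bas_odd, bas_even]
  have : ∀ k : Fin n, (√2 * Real.cos ((k.1 + 1 : ℝ) * x)) ^ 2 + (√2 * Real.sin ((k.1 + 1 : ℝ) * x)) ^ 2 = 2 := by
    intro k
    rw [mul_pow, mul_pow, ← mul_add, Real.cos_sq_add_sin_sq]; simp
  simp [this, bas]; ring

lemma int_cos (m : ℤ) (hm : m ≠ 0) (θ : ℝ) : ∫ x in (0:ℝ)..(2 * π), Real.cos ((m : ℝ) * x - θ) = 0 := by
  have hm' : (m : ℝ) ≠ 0 := by exact_mod_cast hm
  rw [intervalIntegral.integral_comp_mul_sub (f := Real.cos) hm']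
  rw [integral_cos]
  have : (m : ℝ) * (2 * π) - θ = -θ + m * (2 * π) := by ring
  rw [this, Real.sin_add_int_mul_two_pi]
  simp

lemma bas_orth (i j : ℕ) :
    ∫ x in (0:ℝ)..(2 * π), bas i x * bas j x = if i = j then 2 * π else 0 := by
  have key : ∀ (k l : ℕ) (s t : ℝ), (k ≠ l ∨ 0 < l) → ∫ x in (0:ℝ)..(2 * π),
      Real.cos ((k:ℝ) * x - s) * Real.cos ((l : ℝ) * x - t) =
      if k = l then π * Real.cos (s - t) else 0 := by
    intro k l s t h
    have h1 : ∀ x : ℝ, Real.cos ((k:ℝ) * x - s) * Real.cos ((l : ℝ) * x - t) =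
      (1/2) * (Real.cos (((k - l : ℤ):ℝ) * x - (s - t)) + Real.cos (((k + l : ℤ):ℝ) * x - (s + t))) := by
      intro x
      have := Real.two_mul_cos_mul_cos ((k:ℝ) * x - s) ((l : ℝ) * x - t)
      rw [show ((k - l : ℤ):ℝ) * x - (s - t) = ((k:ℝ) * x - s) - ((l : ℝ) * x - t) by push_cast; ring,
        show ((k + l : ℤ):ℝ) * x - (s + t) = ((k:ℝ) * x - s) + ((l : ℝ) * x - t) by push_cast; ring]
      linarith
    simp_rw [h1]
    rw [intervalIntegral.integral_const_mul, intervalIntegral.integral_add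
      (Continuous.intervalIntegrable (by fun_prop) _ _) (Continuous.intervalIntegrable (by fun_prop) _ _)]
    rw [int_cos (k + l) (by omega)]
    split_ifs with hkl
    · subst hkl
      simp [Real.cos_sub]; ring
    · rw [int_cos (k - l) (by omega)]; simp
  have hs : √2 * √2 = 2 := by norm_num
  by_cases hi : i = 0
  · by_cases hj : j = 0
    · subst hi hj; simp [bas]
    · subst hi
      have := key 0 ((j + 1) / 2) 0 (if Even j then π / 2 else 0) (by omega)
      have e : ∀ x, bas 0 x * bas j x = √2 * (Real.cos (((0:ℕ):ℝ) * x - 0) * Real.cos ((((j + 1) / 2 : ℕ) : ℝ) * x - (if Even j then π / 2 else 0))) := by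
        intro x; simp [bas, hj]
      simp_rw [e]
      rw [intervalIntegral.integral_const_mul, this, if_neg (by omega), if_neg (by omega)]; simp
  · by_cases hj : j = 0
    · subst hj
      have := key 0 ((i + 1) / 2) 0 (if Even i then π / 2 else 0) (by omega)
      have e : ∀ x, bas i x * bas 0 x = √2 * (Real.cos (((0:ℕ):ℝ) * x - 0) * Real.cos ((((i + 1) / 2 : ℕ) : ℝ) * x - (if Even i then π / 2 else 0))) := by
        intro x; simp [bas, hi]
      simp_rw [e]
      rw [intervalIntegral.integral_const_mul, this, if_neg (by omega), if_neg (by omega)]; simp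
    · have := key ((i + 1) / 2) ((j + 1) / 2) (if Even i then π / 2 else 0) (if Even j then π / 2 else 0) (by omega)
      have e : ∀ x, bas i x * bas j x = 2 * (Real.cos ((((i + 1) / 2 : ℕ) : ℝ) * x - (if Even i then π / 2 else 0)) * Real.cos ((((j + 1) / 2 : ℕ) : ℝ) * x - (if Even j then π / 2 else 0))) := by
        intro x
        unfold bas
        rw [if_neg hi, if_neg hj, mul_mul_mul_comm, hs]
      simp_rw [e]
      rw [intervalIntegral.integral_const_mul, this]
      by_cases hij : i = j
      · subst hij; simp
      · rw [if_neg hij]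
        by_cases h2 : (i + 1) / 2 = (j + 1) / 2
        · rw [if_pos h2]
          rcases Nat.even_or_odd i with h3 | h3 <;> rcases Nat.even_or_odd j with h4 | h4
          · exfalso; obtain ⟨u, hu⟩ := h3; obtain ⟨v, hv⟩ := h4; omega
          · simp [h3, Nat.not_even_iff_odd.2 h4]
          · simp [h4, Nat.not_even_iff_odd.2 h3]
          · exfalso; obtain ⟨u, hu⟩ := h3; obtain ⟨v, hv⟩ := h4; omega
        · rw [if_neg h2]; simp

/-- Squared Euclidean norm. -/
noncomputable def nsq {n : ℕ} (a : Fin (2 * n + 1) → ℝ) : ℝ := ∑ i, a i ^ 2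

lemma trig_cont (n : ℕ) (a : Fin (2 * n + 1) → ℝ) : Continuous (trigPoly n a) := by
  unfold trigPoly; fun_prop

lemma trig_cont2 (n : ℕ) :
    Continuous (fun z : (Fin (2 * n + 1) → ℝ) × ℝ => trigPoly n z.1 z.2) := by
  unfold trigPoly; fun_prop

lemma parseval (n : ℕ) (a : Fin (2 * n + 1) → ℝ) :
    ∫ x in (0:ℝ)..(2 * π), trigPoly n a x ^ 2 = 2 * π * nsq a := by
  have e : ∀ x, trigPoly n a x ^ 2 = ∑ i, ∑ j, (a i * a j) * (bas i x * bas j x) := by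
    intro x
    rw [trigPoly_eq, sq, Finset.sum_mul_sum]
    refine Finset.sum_congr rfl fun i _ => Finset.sum_congr rfl fun j _ => by ring
  have hc := bas_cont
  simp_rw [e]
  rw [intervalIntegral.integral_finsetSum
    (fun i _ => Continuous.intervalIntegrable (by fun_prop) _ _)]
  have : ∀ i : Fin (2 * n + 1), (∫ x in (0:ℝ)..(2 * π), ∑ j : Fin (2 * n + 1), (a i * a j) * (bas i x * bas j x)) = 2 * π * a i ^ 2 := by
    intro i
    rw [intervalIntegral.integral_finsetSum
      (fun j _ => Continuous.intervalIntegrable (by fun_prop) _ _)]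
    simp_rw [intervalIntegral.integral_const_mul, bas_orth, Fin.val_inj]
    simp; ring
  simp_rw [this, nsq, Finset.mul_sum]

lemma trig_sq_le (n : ℕ) (a : Fin (2 * n + 1) → ℝ) (x : ℝ) :
    trigPoly n a x ^ 2 ≤ (2 * n + 1) * nsq a := by
  have h := sum_bas_sq n x
  rw [trigPoly_eq]
  calc _ ≤ nsq a * ∑ i : Fin (2 * n + 1), bas i x ^ 2 := Finset.sum_mul_sq_le_sq_mul_sq _ _ _
    _ = _ := by rw [h]; ring

lemma ptwise (t : ℝ) (ht : 0 ≤ t) (p : ℝ) (hp : 1 ≤ p) (m : ℕ) (hm : 2 ≤ m) (L : ℝ) (hL : 1 ≤ L) :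
    t ^ 2 ≤ 1 / 4 + L * (2 ^ p * t ^ p) + (1 + t ^ (2 * m)) / L := by
  have h1 : 0 ≤ L * (2 ^ p * t ^ p) := by positivity
  have h2 : 0 ≤ (1 + t ^ (2 * m)) / L := by positivity
  by_cases c1 : t ≤ 1 / 2
  · nlinarith
  push Not at c1
  by_cases c2 : t ^ 2 ≤ L
  · have : 1 ≤ 2 ^ p * t ^ p := by
      rw [← Real.mul_rpow (by norm_num) ht]
      exact Real.one_le_rpow (by linarith) (by linarith)
    nlinarith
  · push Not at c2
    have h4 : t ^ 4 ≤ 1 + t ^ (2 * m) := by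
      by_cases c3 : t ≤ 1
      · have : t ^ 4 ≤ 1 := pow_le_one₀ ht c3
        have : 0 ≤ t ^ (2 * m) := by positivity
        linarith
      · have : t ^ 4 ≤ t ^ (2 * m) := pow_le_pow_right₀ (by linarith) (by omega)
        linarith
    have : t ^ 2 ≤ (1 + t ^ (2 * m)) / L := by
      rw [le_div_iff₀ (by linarith)]
      nlinarith [sq_nonneg t]
    linarith

lemma det_bound {ν : Measure ℝ} [IsProbabilityMeasure ν] (g : ℝ → ℝ)
    (hi : ∀ s : ℝ, 0 ≤ s → Integrable (fun x => |g x| ^ s) ν)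
    (h2 : ∫ x, g x ^ 2 ∂ν = 1) (p q : ℝ) (hp : 1 ≤ p) (hq : 1 ≤ q) (m : ℕ) (hm : 2 ≤ m)
    (hqm : q ≤ 2 * m) :
    (∫ x, |g x| ^ q ∂ν) ^ (1 / q) / (∫ x, |g x| ^ p ∂ν) ^ (1 / p)
      ≤ 16 * 2 ^ p * (1 + ∫ x, g x ^ (4 * m) ∂ν) := by
  have hin : ∀ k : ℕ, Integrable (fun x => |g x| ^ k) ν := by
    intro k
    simpa using hi k (by positivity)
  have i2 : Integrable (fun x => g x ^ (2 * m)) ν := by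
    simpa [pow_mul] using hin (2 * m)
  have i4 : Integrable (fun x => g x ^ (4 * m)) ν := by
    have e : 4 * m = 2 * (2 * m) := by ring
    simpa [e, pow_mul] using hin (2 * (2 * m))
  set M := ∫ x, g x ^ (2 * m) ∂ν with hM
  have hM0 : 0 ≤ M := integral_nonneg fun x => by simp only [Pi.zero_apply, pow_mul]; positivity
  have hMM : M ^ 2 ≤ ∫ x, g x ^ (4 * m) ∂ν := by
    have : 0 ≤ ∫ x, (g x ^ (2 * m) - M) ^ 2 ∂ν := integral_nonneg fun x => by positivity
    have e : ∀ x, (g x ^ (2 * m) - M) ^ 2 = g x ^ (4 * m) - 2 * M * g x ^ (2 * m) + M ^ 2 := by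
      intro x; ring
    simp_rw [e] at this
    have i42 : Integrable (fun x => g x ^ (4 * m) - 2 * M * g x ^ (2 * m)) ν := i4.sub (i2.const_mul _)
    rw [integral_add i42 (integrable_const _),
      integral_sub i4 (i2.const_mul _), integral_const_mul, ← hM] at this
    simp at this
    nlinarith
  have hQ : ∫ x, |g x| ^ q ∂ν ≤ 1 + M := by
    calc ∫ x, |g x| ^ q ∂ν ≤ ∫ x, (1 + g x ^ (2 * m)) ∂ν := by
          refine integral_mono (hi q (by linarith)) ((integrable_const _).add i2) fun x => ?_
          have e : g x ^ (2 * m) = |g x| ^ (2 * m) := by simp [pow_mul]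
          simp only [e]
          by_cases c : |g x| ≤ 1
          · have := Real.rpow_le_one (abs_nonneg (g x)) c (by linarith : 0 ≤ q)
            have : 0 ≤ |g x| ^ (2 * m) := by positivity
            linarith
          · have h : |g x| ^ q ≤ |g x| ^ ((2 * m : ℕ) : ℝ) :=
              Real.rpow_le_rpow_of_exponent_le (by linarith) (by push_cast; exact hqm)
            rw [Real.rpow_natCast] at h
            linarith
      _ = 1 + M := by rw [integral_add (integrable_const _) i2]; simp [hM]
  have hQ0 : 0 ≤ ∫ x, |g x| ^ q ∂ν := integral_nonneg fun x => by positivity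
  have hX : (∫ x, |g x| ^ q ∂ν) ^ (1 / q) ≤ 1 + M := by
    calc (∫ x, |g x| ^ q ∂ν) ^ (1 / q) ≤ (1 + M) ^ (1 / q) :=
          Real.rpow_le_rpow hQ0 hQ (by positivity)
      _ ≤ (1 + M) ^ (1 : ℝ) := Real.rpow_le_rpow_of_exponent_le (by linarith)
          (by rw [div_le_one (by linarith)]; exact hq)
      _ = 1 + M := Real.rpow_one _
  set P := ∫ x, |g x| ^ p ∂ν with hP
  have hP0 : 0 ≤ P := integral_nonneg fun x => by positivity
  have h2p : (1:ℝ) ≤ 2 ^ p := Real.one_le_rpow (by norm_num) (by linarith)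
  have hPl : 1 / (8 * (1 + M) * 2 ^ p) ≤ P := by
    have ip := hi p (by linarith)
    have j1 : Integrable (fun x => (4 * (1 + M)) * (2 ^ p * |g x| ^ p)) ν := (ip.const_mul _).const_mul _
    have j2 : Integrable (fun x => (1 + g x ^ (2 * m)) / (4 * (1 + M))) ν :=
      ((integrable_const _).add i2).div_const _
    have j0 : Integrable (fun _ : ℝ => (1 / 4 : ℝ)) ν := integrable_const _
    have : ∫ x, g x ^ 2 ∂ν ≤ ∫ x, (1 / 4 + (4 * (1 + M)) * (2 ^ p * |g x| ^ p) + (1 + g x ^ (2 * m)) / (4 * (1 + M))) ∂ν := by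
      refine integral_mono (by simpa using hin 2) ((j0.add j1).add j2) fun x => ?_
      have := ptwise |g x| (abs_nonneg _) p hp m hm (4 * (1 + M)) (by linarith)
      have e : |g x| ^ (2 * m) = g x ^ (2 * m) := by simp [pow_mul]
      rw [e, sq_abs] at this
      exact this
    have j01 : Integrable (fun x => 1 / 4 + (4 * (1 + M)) * (2 ^ p * |g x| ^ p)) ν := j0.add j1
    rw [integral_add j01 j2, integral_add j0 j1,
      integral_div (4 * (1 + M)), integral_add (integrable_const _) i2, integral_const_mul, integral_const_mul, ← hM, ← hP, h2] at this
    simp at this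
    have e : (1 + M) / (4 * (1 + M)) = 1 / 4 := by field_simp
    rw [e] at this
    rw [div_le_iff₀ (by positivity)]
    nlinarith
  have hY : 1 / (8 * (1 + M) * 2 ^ p) ≤ P ^ (1 / p) := by
    have hd : 1 ≤ 8 * (1 + M) * 2 ^ p := by nlinarith
    have hd1 : 1 / (8 * (1 + M) * 2 ^ p) ≤ 1 := by rw [div_le_one (by linarith)]; exact hd
    calc 1 / (8 * (1 + M) * 2 ^ p) = (1 / (8 * (1 + M) * 2 ^ p)) ^ (1:ℝ) := (Real.rpow_one _).symm
      _ ≤ (1 / (8 * (1 + M) * 2 ^ p)) ^ (1 / p) :=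
        Real.rpow_le_rpow_of_exponent_ge (by positivity) hd1
          (by rw [div_le_one (by linarith)]; exact hp)
      _ ≤ _ := Real.rpow_le_rpow (by positivity) hPl (by positivity)
  have hYpos : 0 < P ^ (1 / p) := lt_of_lt_of_le (by positivity) hY
  rw [div_le_iff₀ hYpos]
  rw [div_le_iff₀ (by positivity)] at hY
  have hI : (1 + M) ^ 2 ≤ 2 * (1 + ∫ x, g x ^ (4 * m) ∂ν) := by nlinarith [sq_nonneg (M - 1)]
  calc _ ≤ (1 + M) * 1 := by linarith
    _ ≤ (1 + M) * (P ^ (1 / p) * (8 * (1 + M) * 2 ^ p)) := by gcongr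
    _ = (8 * 2 ^ p * P ^ (1 / p)) * (1 + M) ^ 2 := by ring
    _ ≤ (8 * 2 ^ p * P ^ (1 / p)) * (2 * (1 + ∫ x, g x ^ (4 * m) ∂ν)) := by gcongr
    _ = _ := by ring

/-- Normalised measure on the torus. -/
noncomputable def nu : Measure ℝ := ENNReal.ofReal (2 * π)⁻¹ • volume.restrict (Set.Ioc 0 (2 * π))

instance : IsProbabilityMeasure nu := by
  constructor
  have : (0:ℝ) < 2 * π := by positivity
  simp only [nu, Measure.smul_apply, Measure.restrict_apply_univ, Real.volume_Ioc, smul_eq_mul]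
  rw [← ENNReal.ofReal_mul (by positivity)]
  rw [sub_zero, inv_mul_cancel₀ this.ne', ENNReal.ofReal_one]

lemma integral_nu (f : ℝ → ℝ) : ∫ x, f x ∂nu = (2 * π)⁻¹ * ∫ x in (0:ℝ)..(2 * π), f x := by
  rw [nu, integral_smul_measure, intervalIntegral.integral_of_le (by positivity),
    ENNReal.toReal_ofReal (by positivity)]
  simp

lemma integrable_nu {f : ℝ → ℝ} (hf : Continuous f) : Integrable f nu := by
  refine Integrable.smul_measure ?_ (by simp)
  exact (hf.integrableOn_Icc).mono_set Set.Ioc_subset_Icc_self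

lemma torus_eq (p : ℝ) (f : ℝ → ℝ) : torusLpNorm p f = (∫ x, |f x| ^ p ∂nu) ^ (1 / p) := by
  rw [torusLpNorm, integral_nu]

lemma torus_smul (p : ℝ) (hp : 1 ≤ p) (f : ℝ → ℝ) (c : ℝ) (hc : 0 < c) :
    (∫ x, |f x / c| ^ p ∂nu) ^ (1 / p) = torusLpNorm p f / c := by
  have e : ∀ x, |f x / c| ^ p = |f x| ^ p / c ^ p := by
    intro x
    rw [abs_div, abs_of_pos hc, Real.div_rpow (abs_nonneg _) hc.le]
  simp_rw [e]
  rw [integral_div, Real.div_rpow (integral_nonneg fun x => by positivity) (by positivity), torus_eq,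
    ← Real.rpow_mul hc.le, mul_one_div_cancel (by linarith), Real.rpow_one]

/-- The ratio. -/
noncomputable def ratio (p q : ℝ) (n : ℕ) (a : Fin (2 * n + 1) → ℝ) : ℝ :=
  torusLpNorm q (trigPoly n a) / torusLpNorm p (trigPoly n a)

lemma nsq_nonneg {n : ℕ} (a : Fin (2 * n + 1) → ℝ) : 0 ≤ nsq a :=
  Finset.sum_nonneg fun _ _ => sq_nonneg _

lemma nsq_pos {n : ℕ} (a : Fin (2 * n + 1) → ℝ) (h : a ≠ 0) : 0 < nsq a := by
  refine lt_of_le_of_ne (nsq_nonneg a) fun h0 => h ?_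
  have := (Finset.sum_eq_zero_iff_of_nonneg (fun i _ => sq_nonneg (a i))).1 h0.symm
  ext i
  simpa using this i (Finset.mem_univ _)

lemma ratio_le (p q : ℝ) (hp : 1 ≤ p) (hq : 1 ≤ q) (m : ℕ) (hm : 2 ≤ m) (hqm : q ≤ 2 * m)
    (n : ℕ) (a : Fin (2 * n + 1) → ℝ) (ha : a ≠ 0) :
    ratio p q n a ≤ 16 * 2 ^ p * (1 + ∫ x, trigPoly n a x ^ (4 * m) / nsq a ^ (2 * m) ∂nu) := by
  have hc : 0 < √(nsq a) := Real.sqrt_pos.2 (nsq_pos a ha)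
  have hs : √(nsq a) ^ 2 = nsq a := Real.sq_sqrt (nsq_nonneg a)
  have hT := trig_cont n a
  have := det_bound (ν := nu) (fun x => trigPoly n a x / √(nsq a))
    (fun s hs => integrable_nu (Continuous.rpow_const (by fun_prop) (fun x => Or.inr hs)))
    (by
      simp_rw [div_pow, hs]
      rw [integral_div, integral_nu, parseval, ← mul_assoc, inv_mul_cancel₀ (by positivity), one_mul,
        div_self (nsq_pos a ha).ne']) p q hp hq m hm hqm
  simp only [torus_smul _ hp _ _ hc, torus_smul _ hq _ _ hc, div_div_div_cancel_right₀ hc.ne'] at this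
  have e : √(nsq a) ^ (4 * m) = nsq a ^ (2 * m) := by
    rw [show 4 * m = 2 * (2 * m) by ring, pow_mul, hs]
  simpa only [div_pow, e, ratio] using this

lemma torus_pos (p : ℝ) (n : ℕ) (a : Fin (2 * n + 1) → ℝ) (hp : 1 ≤ p) (ha : a ≠ 0) :
    0 < torusLpNorm p (trigPoly n a) := by
  rw [torus_eq]
  apply Real.rpow_pos_of_pos
  have hT := trig_cont n a
  have hi : Integrable (fun x => |trigPoly n a x| ^ p) nu :=
    integrable_nu (Continuous.rpow_const (by fun_prop) (fun x => Or.inr (by linarith)))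
  have h0 : 0 ≤ ∫ x, |trigPoly n a x| ^ p ∂nu := integral_nonneg fun x => by positivity
  refine lt_of_le_of_ne h0 fun h => ?_
  have h1 := (integral_eq_zero_iff_of_nonneg (fun x => by positivity) hi).1 h.symm
  have h2 : ∫ x, trigPoly n a x ^ 2 ∂nu = 0 := by
    apply integral_eq_zero_of_ae
    filter_upwards [h1] with x hx
    have := (Real.rpow_eq_zero (abs_nonneg _) (by linarith)).1 hx
    simpa using this
  rw [integral_nu, parseval, ← mul_assoc, inv_mul_cancel₀ (by positivity), one_mul] at h2
  exact (nsq_pos a ha).ne' h2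

lemma torus_meas (p : ℝ) (hp : 1 ≤ p) (n : ℕ) : Measurable fun a => torusLpNorm p (trigPoly n a) := by
  simp_rw [torus_eq]
  refine Measurable.pow_const ?_ _
  have h : StronglyMeasurable (fun z : (Fin (2 * n + 1) → ℝ) × ℝ => |trigPoly n z.1 z.2| ^ p) := by
    refine Continuous.stronglyMeasurable ?_
    exact Continuous.rpow_const (trig_cont2 n).abs (fun x => Or.inr (by linarith))
  exact h.integral_prod_right'.measurable

lemma ratio_meas (p q : ℝ) (hp : 1 ≤ p) (hq : 1 ≤ q) (n : ℕ) : Measurable (ratio p q n) :=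
  (torus_meas q hq n).div (torus_meas p hp n)

/-- The Gaussian measure. -/
noncomputable abbrev gam (n : ℕ) : Measure (Fin (2 * n + 1) → ℝ) :=
  Measure.pi fun _ => gaussianReal 0 1

lemma exp_lin (n : ℕ) (v : Fin (2 * n + 1) → ℝ) :
    Integrable (fun a => Real.exp (∑ i, v i * a i)) (gam n) ∧
    ∫ a, Real.exp (∑ i, v i * a i) ∂(gam n) = Real.exp ((∑ i, v i ^ 2) / 2) := by
  simp_rw [Real.exp_sum]
  constructor
  · exact Integrable.fintype_prod (f := fun i x => Real.exp (v i * x))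
      (fun i => integrable_exp_mul_gaussianReal (v i))
  · rw [integral_fintype_prod_eq_prod (fun i x => Real.exp (v i * x)), Finset.sum_div, Real.exp_sum]
    refine Finset.prod_congr rfl fun i _ => ?_
    have := congrFun (mgf_fun_id_gaussianReal (μ := 0) (v := 1)) (v i)
    simpa [mgf] using this

lemma one_dim : ∫ x, Real.exp (-(x ^ 2) / 2) ∂(gaussianReal 0 1) = 1 / √2 := by
  rw [integral_gaussianReal_eq_integral_smul (by simp)]
  have e : ∀ x : ℝ, gaussianPDFReal 0 1 x • Real.exp (-(x ^ 2) / 2) = (√(2 * π))⁻¹ * Real.exp (-1 * x ^ 2) := by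
    intro x
    simp only [gaussianPDFReal, smul_eq_mul, NNReal.coe_one, mul_one, sub_zero]
    rw [mul_assoc, ← Real.exp_add]
    congr 2; ring
  simp_rw [e]
  rw [integral_const_mul, integral_gaussian, div_one, Real.sqrt_mul (by norm_num)]
  have : √π ≠ 0 := by positivity
  field_simp

lemma exp_nsq (n : ℕ) :
    Integrable (fun a => Real.exp (-(nsq a) / 2)) (gam n) ∧
    ∫ a, Real.exp (-(nsq a) / 2) ∂(gam n) = (1 / √2) ^ (2 * n + 1) := by
  have e : ∀ a : Fin (2 * n + 1) → ℝ, Real.exp (-(nsq a) / 2) = ∏ i, Real.exp (-(a i ^ 2) / 2) := by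
    intro a
    rw [← Real.exp_sum, nsq, ← Finset.sum_div, Finset.sum_neg_distrib]
  simp_rw [e]
  constructor
  · refine Integrable.fintype_prod (f := fun i x => Real.exp (-(x ^ 2) / 2)) (fun i => ?_)
    refine Integrable.of_bound (C := 1) (Continuous.aestronglyMeasurable (by fun_prop)) (ae_of_all _ fun x => ?_)
    rw [Real.norm_eq_abs, abs_of_pos (Real.exp_pos _), Real.exp_le_one_iff]
    nlinarith [sq_nonneg x]
  · rw [integral_fintype_prod_eq_prod (fun i x => Real.exp (-(x ^ 2) / 2))]
    simp [one_dim]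

/-- Dominating function. -/
noncomputable def dom (j n : ℕ) (z : (Fin (2 * n + 1) → ℝ) × ℝ) : ℝ :=
  (2 ^ j * (2 * j).factorial) *
    (Real.exp (trigPoly n z.1 z.2 / √(2 * n + 1)) + Real.exp (-(trigPoly n z.1 z.2) / √(2 * n + 1)))
  + (((2 * n + 1 : ℝ) ^ j) * Real.exp ((2 * n + 1) / 4)) * Real.exp (-(nsq z.1) / 2)

lemma pow_le_dom (j n : ℕ) (a : Fin (2 * n + 1) → ℝ) (x : ℝ) (ha : a ≠ 0) :
    trigPoly n a x ^ (2 * j) / nsq a ^ j ≤ dom j n (a, x) := by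
  have hN : (0:ℝ) < 2 * n + 1 := by positivity
  have hs := nsq_pos a ha
  unfold dom
  simp only
  set T := trigPoly n a x
  have hT2 : T ^ 2 ≤ (2 * n + 1) * nsq a := trig_sq_le n a x
  have t1 : 0 ≤ (2 ^ j * ((2 * j).factorial : ℝ)) *
    (Real.exp (T / √(2 * n + 1)) + Real.exp (-T / √(2 * n + 1))) := by positivity
  have t2 : 0 ≤ (((2 * n + 1 : ℝ) ^ j) * Real.exp ((2 * n + 1) / 4)) * Real.exp (-(nsq a) / 2) := by positivity
  rw [pow_mul, ← div_pow]
  by_cases c : nsq a ≤ (2 * n + 1) / 2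
  · have : (T ^ 2 / nsq a) ^ j ≤ (2 * n + 1) ^ j := by
      gcongr
      rw [div_le_iff₀ hs]; exact hT2
    have h1 : 1 ≤ Real.exp ((2 * n + 1) / 4) * Real.exp (-(nsq a) / 2) := by
      rw [← Real.exp_add]
      apply Real.one_le_exp
      linarith
    have : (2 * n + 1 : ℝ) ^ j * 1 ≤ (2 * n + 1) ^ j * (Real.exp ((2 * n + 1) / 4) * Real.exp (-(nsq a) / 2)) := by
      gcongr
    linarith
  · push Not at c
    have h1 : (T ^ 2 / nsq a) ^ j ≤ (2 * (T / √(2 * n + 1)) ^ 2) ^ j := by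
      gcongr
      rw [div_pow, Real.sq_sqrt hN.le, ← mul_div_assoc, div_le_div_iff₀ hs hN]
      nlinarith [sq_nonneg T]
    have h2 : |T / √(2 * n + 1)| ^ (2 * j) / (2 * j).factorial ≤ Real.exp |T / √(2 * n + 1)| :=
      Real.pow_div_factorial_le_exp _ (abs_nonneg _) _
    have h3 : Real.exp |T / √(2 * n + 1)| ≤ Real.exp (T / √(2 * n + 1)) + Real.exp (-T / √(2 * n + 1)) := by
      rw [neg_div]
      rcases abs_cases (T / √(2 * n + 1)) with h | h <;> rw [h.1]
      · linarith [Real.exp_pos (-(T / √(2 * n + 1)))]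
      · linarith [Real.exp_pos ((T / √(2 * n + 1)))]
    rw [div_le_iff₀ (by positivity)] at h2
    rw [mul_pow, ← pow_mul, ← (even_two_mul j).pow_abs (T / √(2 * n + 1))] at h1
    have h4 : (2:ℝ) ^ j * |T / √(2 * n + 1)| ^ (2 * j) ≤ 2 ^ j * ((Real.exp (T / √(2 * n + 1)) + Real.exp (-T / √(2 * n + 1))) * (2 * j).factorial) := by
      gcongr
      exact h2.trans (by gcongr)
    linarith

lemma dom_cont (j n : ℕ) : Continuous (dom j n) := by
  have := trig_cont2 n
  unfold dom nsq
  fun_prop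

lemma dom_nonneg (j n : ℕ) (z) : 0 ≤ dom j n z := by
  unfold dom; positivity

lemma dom_slice (j n : ℕ) (x : ℝ) : Integrable (fun a => dom j n (a, x)) (gam n) ∧
    ∫ a, dom j n (a, x) ∂(gam n) = (2 ^ j * (2 * j).factorial) * (2 * Real.exp (1 / 2)) +
      (((2 * n + 1 : ℝ) ^ j) * Real.exp ((2 * n + 1) / 4)) * (1 / √2) ^ (2 * n + 1) := by
  have hN : (0:ℝ) < 2 * n + 1 := by positivity
  have hsum : (∑ i : Fin (2 * n + 1), (bas i x / √(2 * n + 1)) ^ 2) / 2 = 1 / 2 := by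
    simp_rw [div_pow, Real.sq_sqrt hN.le]
    rw [← Finset.sum_div, sum_bas_sq, div_self hN.ne']
  have e1 : ∀ a : Fin (2 * n + 1) → ℝ, trigPoly n a x / √(2 * n + 1) = ∑ i : Fin (2 * n + 1), (bas i x / √(2 * n + 1)) * a i := by
    intro a
    rw [trigPoly_eq, Finset.sum_div]
    exact Finset.sum_congr rfl fun i _ => by ring
  have e2 : ∀ a : Fin (2 * n + 1) → ℝ, -trigPoly n a x / √(2 * n + 1) = ∑ i : Fin (2 * n + 1), (-(bas i x / √(2 * n + 1))) * a i := by
    intro a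
    rw [neg_div, e1, ← Finset.sum_neg_distrib]
    exact Finset.sum_congr rfl fun i _ => by ring
  obtain ⟨i1, j1⟩ := exp_lin n (fun i => bas i x / √(2 * n + 1))
  obtain ⟨i2, j2⟩ := exp_lin n (fun i => -(bas i x / √(2 * n + 1)))
  obtain ⟨i3, j3⟩ := exp_nsq n
  simp only [neg_sq] at j2
  rw [hsum] at j1 j2
  simp only [dom, e1, e2]
  have k1 : Integrable (fun a : Fin (2 * n + 1) → ℝ => (2 ^ j * ((2 * j).factorial : ℝ)) *
    (Real.exp (∑ i : Fin (2 * n + 1), (bas i x / √(2 * n + 1)) * a i) + Real.exp (∑ i : Fin (2 * n + 1), (-(bas i x / √(2 * n + 1))) * a i))) (gam n) :=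
    (i1.add i2).const_mul _
  refine ⟨k1.add (i3.const_mul _), ?_⟩
  rw [integral_add k1 (i3.const_mul _), integral_const_mul, integral_const_mul, integral_add i1 i2, j1, j2, j3]
  ring

lemma dom_int (j n : ℕ) : Integrable (dom j n) ((gam n).prod nu) := by
  rw [integrable_prod_iff' (dom_cont j n).aestronglyMeasurable]
  refine ⟨ae_of_all _ fun x => (dom_slice j n x).1, ?_⟩
  simp only [Real.norm_eq_abs, abs_of_nonneg (dom_nonneg j n _), (dom_slice j n _).2]
  exact integrable_const _

lemma dom_total (j n : ℕ) : ∫ a, ∫ x, dom j n (a, x) ∂nu ∂(gam n) =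
    (2 ^ j * (2 * j).factorial) * (2 * Real.exp (1 / 2)) +
      (((2 * n + 1 : ℝ) ^ j) * Real.exp ((2 * n + 1) / 4)) * (1 / √2) ^ (2 * n + 1) := by
  rw [integral_integral_swap (f := fun a x => dom j n (a, x)) (dom_int j n)]
  simp [(dom_slice j n _).2]

lemma const_bound (j : ℕ) : ∃ B : ℝ, ∀ n : ℕ,
    (((2 * n + 1 : ℝ) ^ j) * Real.exp ((2 * n + 1) / 4)) * (1 / √2) ^ (2 * n + 1) ≤ B := by
  have hr : Real.exp (1 / 4) * (1 / √2) < 1 := by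
    rw [mul_one_div, div_lt_one (by positivity)]
    apply Real.lt_sqrt_of_sq_lt
    rw [← Real.exp_nat_mul]
    have h1 : Real.exp ((2:ℕ) * (1 / 4)) ^ 2 < 2 ^ 2 := by
      rw [← Real.exp_nat_mul]
      have := Real.exp_one_lt_d9
      norm_num
      linarith
    exact lt_of_pow_lt_pow_left₀ 2 (by norm_num) h1
  have h := (tendsto_pow_const_mul_const_pow_of_lt_one j (by positivity) hr).bddAbove_range
  obtain ⟨B, hB⟩ := h
  refine ⟨B, fun n => ?_⟩
  have := hB ⟨2 * n + 1, rfl⟩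
  refine le_trans (le_of_eq ?_) this
  simp only []
  rw [mul_pow, ← Real.exp_nat_mul]
  push_cast
  rw [mul_assoc]
  congr 3
  ring

lemma ae_ne (n : ℕ) : ∀ᵐ a ∂(gam n), a ≠ 0 := by
  have : NullSingletonClass (gaussianReal 0 1) := nullSingletonClass_gaussianReal (by simp)
  exact Measure.ae_ne _ _

lemma ratio_nonneg (p q : ℝ) (n : ℕ) (a) : 0 ≤ ratio p q n a := by
  unfold ratio
  simp only [torus_eq]
  have : ∀ s : ℝ, 0 ≤ ∫ x, |trigPoly n a x| ^ s ∂nu := fun s => integral_nonneg fun x => by positivity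
  have h1 := this p
  have h2 := this q
  positivity

lemma upper (p q : ℝ) (hp : 1 ≤ p) (hq : 1 ≤ q) : ∃ C : ℝ, 0 < C ∧ ∀ n : ℕ,
    Integrable (ratio p q n) (gam n) ∧ ∫ a, ratio p q n a ∂(gam n) ≤ C := by
  obtain ⟨m0, hm0⟩ := exists_nat_ge q
  set m := m0 + 2
  have hqm : q ≤ 2 * (m : ℝ) := by simp only [m]; push_cast; linarith
  obtain ⟨B, hB⟩ := const_bound (2 * m)
  refine ⟨16 * 2 ^ p * (1 + ((2 ^ (2 * m) * (2 * (2 * m)).factorial) * (2 * Real.exp (1 / 2)) + max B 0)),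
    by positivity, fun n => ?_⟩
  have hle : ∀ᵐ a ∂(gam n), ratio p q n a ≤ 16 * 2 ^ p * (1 + ∫ x, dom (2 * m) n (a, x) ∂nu) := by
    filter_upwards [ae_ne n] with a ha
    refine (ratio_le p q hp hq m (by omega) hqm n a ha).trans ?_
    have hT := trig_cont n a
    have hd : Continuous fun x => dom (2 * m) n (a, x) := (dom_cont (2 * m) n).comp (by fun_prop)
    gcongr
    · exact integrable_nu (by fun_prop)
    · exact integrable_nu hd
    · intro x
      have := pow_le_dom (2 * m) n a x ha
      rwa [show 2 * (2 * m) = 4 * m by ring] at this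
  have hid : Integrable (fun a => 16 * 2 ^ p * (1 + ∫ x, dom (2 * m) n (a, x) ∂nu)) (gam n) :=
    ((integrable_const _).add (dom_int (2 * m) n).integral_prod_left).const_mul _
  have hint : Integrable (ratio p q n) (gam n) := by
    refine hid.mono' (ratio_meas p q hp hq n).aestronglyMeasurable ?_
    filter_upwards [hle] with a ha
    rwa [Real.norm_eq_abs, abs_of_nonneg (ratio_nonneg p q n a)]
  refine ⟨hint, (integral_mono_ae hint hid hle).trans ?_⟩
  rw [integral_const_mul, integral_add (integrable_const _) (dom_int (2 * m) n).integral_prod_left, dom_total]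
  simp only [integral_const, probReal_univ, smul_eq_mul, mul_one]
  gcongr
  exact (hB n).trans (le_max_left _ _)

theorem average_nikolskii_bounded (p q : ℝ) (hp : 1 ≤ p) (hq : 1 ≤ q) :
    ∃ c C : ℝ, 0 < c ∧ 0 < C ∧ ∀ n : ℕ,
      c ≤ (∫ a : Fin (2 * n + 1) → ℝ,
            torusLpNorm q (trigPoly n a) / torusLpNorm p (trigPoly n a)
            ∂(Measure.pi fun _ => gaussianReal 0 1)) ∧
        (∫ a : Fin (2 * n + 1) → ℝ,
            torusLpNorm q (trigPoly n a) / torusLpNorm p (trigPoly n a)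
            ∂(Measure.pi fun _ => gaussianReal 0 1)) ≤ C := by
  obtain ⟨C, hC, h1⟩ := upper p q hp hq
  obtain ⟨D, hD, h2⟩ := upper q p hq hp
  refine ⟨1 / D, C, by positivity, hC, fun n => ⟨?_, (h1 n).2⟩⟩
  obtain ⟨i1, -⟩ := h1 n
  obtain ⟨i2, b2⟩ := h2 n
  have hle : ∀ᵐ a ∂(gam n), 2 / D - (1 / D ^ 2) * ratio q p n a ≤ ratio p q n a := by
    filter_upwards [ae_ne n] with a ha
    have hx := torus_pos q n a hq ha
    have hy := torus_pos p n a hp ha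
    have e : ratio q p n a = (ratio p q n a)⁻¹ := by simp [ratio]
    have hr : 0 < ratio p q n a := div_pos hx hy
    rw [e]
    set r := ratio p q n a
    have : r - (2 / D - (1 / D ^ 2) * r⁻¹) = (r * D - 1) ^ 2 / (r * D ^ 2) := by field_simp; ring
    have h : 0 ≤ (r * D - 1) ^ 2 / (r * D ^ 2) := by positivity
    linarith
  have hi3 : Integrable (fun a => 2 / D - (1 / D ^ 2) * ratio q p n a) (gam n) :=
    (integrable_const _).sub (i2.const_mul _)
  have := integral_mono_ae hi3 i1 hle
  rw [integral_sub (integrable_const _) (i2.const_mul _), integral_const_mul] at this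
  simp only [integral_const, probReal_univ, smul_eq_mul, one_mul] at this
  refine le_trans ?_ this
  have h3 : 1 / D ^ 2 * ∫ a, ratio q p n a ∂(gam n) ≤ 1 / D ^ 2 * D := by gcongr
  have h4 : 1 / D ^ 2 * D = 1 / D := by field_simp
  have h5 : 2 / D = 1 / D + 1 / D := by ring
  linarith
end
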